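/- Let (A,∘,∗) be a compatible anti-pre-Lie algebra and B a symmetric bilinear form on A that is invariant on (A,∘,∗), i.e., B(x∘y,z) = B(y, x∘z − z∘x) and B(x∗y,z) = B(y, x∗z − z∗x) for all x,y,z ∈ A. Then B is a commutative 2-cocycle on both commutator Lie brackets: B([x,y]ᵢ,z) + B([y,z]ᵢ,x) + B([z,x]ᵢ,y) = 0 for i = 1,2 and all x,y,z ∈ A, where [x,y]₁ = x∘y−y∘x and [x,y]₂ = x∗y−y∗x; consequently B is a commutative 2-cocycle for every bracket k₁[-,-]₁+k₂[-,-]₂. -/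

import Mathlib

/-- An anti-pre-Lie algebra structure. -/
def IsAntiPreLie {A : Type*} [AddCommGroup A] [Module ℂ A]
    (m : A →ₗ[ℂ] A →ₗ[ℂ] A) : Prop :=
  (∀ x y z : A, m x (m y z) - m y (m x z) = m (m y x - m x y) z) ∧
  (∀ x y z : A, m (m x y - m y x) z + m (m y z - m z y) x + m (m z x - m x z) y = 0)

section

open LinearMap (BilinMap)

variable {R A N : Type*} [CommSemiring R] [AddCommGroup A] [Module R A]
  [AddCommGroup N] [Module R N]

/-- The commutator bracket `[x, y] = x ∘ y - y ∘ x` of a bilinear product `m = ∘`; it is a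
Lie bracket when `m` is anti-pre-Lie. -/
def commutatorBracket (m : BilinMap R A A) : BilinMap R A A := m - m.flip

theorem commutatorBracket_apply (m : BilinMap R A A) (x y : A) :
    commutatorBracket m x y = m x y - m y x :=
  rfl

theorem neg_commutatorBracket (m : BilinMap R A A) (x y : A) :
    -commutatorBracket m x y = commutatorBracket m y x :=
  neg_sub (m x y) (m y x)

/-- Invariance of a bilinear map `B` on an algebra with product `m`, in the sense used for
anti-pre-Lie algebras: `B(x ∘ y, z) = B(y, [x, z])`. -/
def IsInvariantForm (m : BilinMap R A A) (B : BilinMap R A N) : Prop :=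
  ∀ x y z, B (m x y) z = B y (commutatorBracket m x z)

/-- Commutative 2-cocycles: symmetric bilinear maps `B` whose cyclic sum along the bracket
vanishes. The bracket is an arbitrary bilinear product, not necessarily a Lie bracket. -/
structure IsCommutativeTwoCocycle (bracket : BilinMap R A A) (B : BilinMap R A N) : Prop where
  symm : ∀ x y, B x y = B y x
  cyclic_sum_eq_zero : ∀ x y z, B (bracket x y) z + B (bracket y z) x + B (bracket z x) y = 0

namespace IsInvariantForm

variable {m : BilinMap R A A} {B : BilinMap R A N}

theorem apply_eq_apply_commutatorBracket (hB : IsInvariantForm m B) (symm : ∀ x y, B x y = B y x)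
    (x y z : A) : B (m x y) z = B (commutatorBracket m x z) y :=
  (hB x y z).trans (symm _ _)

-- The cocycle identity is `B(x ∘ y, z) = B([x, z], y)` antisymmetrised in `x` and `y`.
theorem isCommutativeTwoCocycle (hB : IsInvariantForm m B) (symm : ∀ x y, B x y = B y x) :
    IsCommutativeTwoCocycle (commutatorBracket m) B where
  symm := symm
  cyclic_sum_eq_zero x y z := by
    have bracket_eq : B (commutatorBracket m x y) z =
        B (commutatorBracket m x z) y - B (commutatorBracket m y z) x := by
      rw [commutatorBracket_apply m x y, map_sub, LinearMap.sub_apply,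
        hB.apply_eq_apply_commutatorBracket symm, hB.apply_eq_apply_commutatorBracket symm]
    rw [bracket_eq, ← neg_commutatorBracket m x z, map_neg, LinearMap.neg_apply]
    abel

end IsInvariantForm

namespace IsCommutativeTwoCocycle

variable {b₁ b₂ : BilinMap R A A} {B : BilinMap R A N}

theorem add (h₁ : IsCommutativeTwoCocycle b₁ B) (h₂ : IsCommutativeTwoCocycle b₂ B) :
    IsCommutativeTwoCocycle (b₁ + b₂) B where
  symm := h₁.symm
  cyclic_sum_eq_zero x y z := by
    simp only [LinearMap.add_apply, map_add]
    linear_combination (norm := abel) h₁.cyclic_sum_eq_zero x y z + h₂.cyclic_sum_eq_zero x y z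

theorem smul (k : R) (h : IsCommutativeTwoCocycle b₁ B) :
    IsCommutativeTwoCocycle (k • b₁) B where
  symm := h.symm
  cyclic_sum_eq_zero x y z := by
    simp only [LinearMap.smul_apply, map_smul, ← smul_add, h.cyclic_sum_eq_zero, smul_zero]

end IsCommutativeTwoCocycle

theorem invariant_form_is_commutative_two_cocycle_general {c s : BilinMap R A A}
    {B : BilinMap R A N} (symm : ∀ x y, B x y = B y x)
    (hc : IsInvariantForm c B) (hs : IsInvariantForm s B) :
    IsCommutativeTwoCocycle (commutatorBracket c) B ∧
    IsCommutativeTwoCocycle (commutatorBracket s) B ∧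
    ∀ k₁ k₂ : R,
      IsCommutativeTwoCocycle (k₁ • commutatorBracket c + k₂ • commutatorBracket s) B := by
  have cocycle_c := hc.isCommutativeTwoCocycle symm
  have cocycle_s := hs.isCommutativeTwoCocycle symm
  exact ⟨cocycle_c, cocycle_s, fun k₁ k₂ ↦ (cocycle_c.smul k₁).add (cocycle_s.smul k₂)⟩

end

/-- Let `(A,∘ = c,∗ = s)` be a compatible anti-pre-Lie algebra and `B` a
symmetric bilinear form invariant on `(A,∘,∗)`: `B(x∘y,z) = B(y, x∘z − z∘x)` and
`B(x∗y,z) = B(y, x∗z − z∗x)`. Then `B` is a commutative 2-cocycle on both commutator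
brackets `[x,y]₁ = x∘y−y∘x` and `[x,y]₂ = x∗y−y∗x`, and on every linear combination
`k₁[-,-]₁ + k₂[-,-]₂` of them. -/
theorem invariant_form_is_commutative_two_cocycle {A : Type*} [AddCommGroup A]
    [Module ℂ A] (c s : A →ₗ[ℂ] A →ₗ[ℂ] A)
    (h : ∀ k₁ k₂ : ℂ, IsAntiPreLie (k₁ • c + k₂ • s))
    (B : A →ₗ[ℂ] A →ₗ[ℂ] ℂ)
    (hsym : ∀ x y : A, B x y = B y x)
    (hinv₁ : ∀ x y z : A, B (c x y) z = B y (c x z - c z x))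
    (hinv₂ : ∀ x y z : A, B (s x y) z = B y (s x z - s z x)) :
    (∀ x y z : A,
      B (c x y - c y x) z + B (c y z - c z y) x + B (c z x - c x z) y = 0) ∧
    (∀ x y z : A,
      B (s x y - s y x) z + B (s y z - s z y) x + B (s z x - s x z) y = 0) ∧
    (∀ (k₁ k₂ : ℂ) (x y z : A),
      B (k₁ • (c x y - c y x) + k₂ • (s x y - s y x)) z
        + B (k₁ • (c y z - c z y) + k₂ • (s y z - s z y)) x
        + B (k₁ • (c z x - c x z) + k₂ • (s z x - s x z)) y = 0) := by
  obtain ⟨cocycle_c, cocycle_s, cocycle_combination⟩ :=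
    invariant_form_is_commutative_two_cocycle_general hsym hinv₁ hinv₂
  exact ⟨cocycle_c.cyclic_sum_eq_zero, cocycle_s.cyclic_sum_eq_zero,
    fun k₁ k₂ ↦ (cocycle_combination k₁ k₂).cyclic_sum_eq_zero⟩
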